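/- Let β_n ≤ n log n eventually, and consider the random spanning tree WST_n^{β_n} of K_n with i.i.d. Uniform[0,1] labels U_e and tree-weights proportional to exp(−β_n Σ_{e∈T} U_e). Then the expected total length satisfies E[L(WST_n^{β_n})] = O(n log n / (β_n + log n)); in particular, E[L(WST_n^{β_n})] ≤ E[L(MST_n)] + O(n log n / β_n) + O(1/n) whenever β_n ≥ log n. -/

import Mathlib

open MeasureTheory Filter

/-- `T` is a spanning tree of the graph `G`. -/
def IsSpanningTree {V : Type*} [Fintype V] (G : SimpleGraph V) (T : Finset (Sym2 V)) : Prop :=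
  ↑T ⊆ G.edgeSet ∧ (SimpleGraph.fromEdgeSet (↑T : Set (Sym2 V))).IsTree

/-- The total label-length `∑_{e ∈ T} u e` of a tree `T`. -/
noncomputable def treeLen {n : ℕ} (u : Sym2 (Fin n) → ℝ) (T : Finset (Sym2 (Fin n))) : ℝ :=
  ∑ e ∈ T, u e

open Classical in
/-- The quenched expected total length of `WST_n^β` given the labels `u`:
`E[L(WST) | U = u] = (∑_T e^{-β L(T)} L(T)) / (∑_T e^{-β L(T)})`, sums over
spanning trees of `K_n`. -/
noncomputable def quenchedWSTLen (n : ℕ) (β : ℝ) (u : Sym2 (Fin n) → ℝ) : ℝ :=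
  (∑ T ∈ Finset.univ.filter (fun T => IsSpanningTree (⊤ : SimpleGraph (Fin n)) T),
      Real.exp (-β * treeLen u T) * treeLen u T) /
  (∑ T ∈ Finset.univ.filter (fun T => IsSpanningTree (⊤ : SimpleGraph (Fin n)) T),
      Real.exp (-β * treeLen u T))

/-- The law of the i.i.d. Uniform[0,1] edge labels on `K_n`. -/
noncomputable def labelMeasure (n : ℕ) : Measure (Sym2 (Fin n) → ℝ) :=
  Measure.pi fun _ => volume.restrict (Set.Icc (0 : ℝ) 1)

/-- The (annealed) expected total length `E[L(WST_n^β)]`. -/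
noncomputable def EWST (n : ℕ) (β : ℝ) : ℝ :=
  ∫ u, quenchedWSTLen n β u ∂(labelMeasure n)

/-- The total length of the minimum spanning tree for labels `u`. -/
noncomputable def MSTLen (n : ℕ) (u : Sym2 (Fin n) → ℝ) : ℝ :=
  sInf {x | ∃ T, IsSpanningTree (⊤ : SimpleGraph (Fin n)) T ∧ x = treeLen u T}

/-- The expected total length `E[L(MST_n)]`. -/
noncomputable def EMST (n : ℕ) : ℝ := ∫ u, MSTLen n u ∂(labelMeasure n)


open scoped ENNReal

namespace WSTaux

open Classical in
noncomputable def TS (n : ℕ) : Finset (Finset (Sym2 (Fin n))) :=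
  Finset.univ.filter (fun T => IsSpanningTree (⊤ : SimpleGraph (Fin n)) T)

lemma mem_TS {n : ℕ} {T : Finset (Sym2 (Fin n))} :
    T ∈ TS n ↔ IsSpanningTree (⊤ : SimpleGraph (Fin n)) T := by
  classical
  simp [TS]

lemma quenched_eq (n : ℕ) (β : ℝ) (u : Sym2 (Fin n) → ℝ) :
    quenchedWSTLen n β u = (∑ T ∈ TS n, Real.exp (-β * treeLen u T) * treeLen u T) /
      (∑ T ∈ TS n, Real.exp (-β * treeLen u T)) := rfl

/-- A connected set of edges contains a spanning tree. -/
lemma exists_tree {n : ℕ} (F : Finset (Sym2 (Fin n)))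
    (hF : (SimpleGraph.fromEdgeSet (↑F : Set (Sym2 (Fin n)))).Connected) :
    ∃ T ∈ TS n, T ⊆ F := by
  classical
  obtain ⟨G, hle, hG⟩ := hF.exists_isTree_le
  refine ⟨G.edgeFinset, mem_TS.2 ⟨?_, ?_⟩, ?_⟩
  · intro e he
    exact SimpleGraph.edgeSet_mono le_top (by simpa using he)
  · simpa using hG
  · intro e he
    have h1 : e ∈ G.edgeSet := by simpa using he
    have h2 := SimpleGraph.edgeSet_mono hle h1
    rw [SimpleGraph.edgeSet_fromEdgeSet] at h2
    exact_mod_cast h2.1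

lemma TS_nonempty {n : ℕ} (hn : 1 ≤ n) : (TS n).Nonempty := by
  classical
  have : Nonempty (Fin n) := ⟨⟨0, hn⟩⟩
  obtain ⟨T, hT, -⟩ := exists_tree (n := n) Finset.univ (by
    simp only [Finset.coe_univ, SimpleGraph.fromEdgeSet_univ]
    exact SimpleGraph.connected_top)
  exact ⟨T, hT⟩

lemma TS_card_edges {n : ℕ} {T : Finset (Sym2 (Fin n))} (hT : T ∈ TS n) : T.card + 1 = n := by
  classical
  obtain ⟨h1, h2⟩ := mem_TS.1 hT
  have h3 := h2.card_edgeFinset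
  have h4 : (SimpleGraph.fromEdgeSet (↑T : Set (Sym2 (Fin n)))).edgeFinset = T := by
    ext e
    simp only [SimpleGraph.mem_edgeFinset, SimpleGraph.edgeSet_fromEdgeSet, Set.mem_sdiff,
      Finset.mem_coe]
    refine ⟨fun h => h.1, fun h => ⟨h, ?_⟩⟩
    have := h1 h
    exact SimpleGraph.not_isDiag_of_mem_edgeSet _ this
  rw [h4] at h3
  simpa using h3

lemma TS_card {n : ℕ} (hn : 1 ≤ n) : (TS n).card ≤ (n ^ 2) ^ n := by
  classical
  have h1 : TS n ⊆ Finset.powersetCard (n - 1) Finset.univ := by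
    intro T hT
    have := TS_card_edges hT
    simp only [Finset.mem_powersetCard, Finset.subset_univ, true_and]
    omega
  have h2 := Finset.card_le_card h1
  rw [Finset.card_powersetCard, Finset.card_univ, Sym2.card, Fintype.card_fin] at h2
  have h3 : (n + 1).choose 2 ≤ n ^ 2 := by
    rw [Nat.choose_two_right]
    apply Nat.div_le_of_le_mul
    simp
    nlinarith
  calc (TS n).card ≤ _ := h2
    _ ≤ ((n + 1).choose 2) ^ (n - 1) := Nat.choose_le_pow _ _
    _ ≤ (n ^ 2) ^ (n - 1) := Nat.pow_le_pow_left h3 _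
    _ ≤ (n ^ 2) ^ n := Nat.pow_le_pow_right (by positivity) (by omega)

lemma MSTLen_le {n : ℕ} (u : Sym2 (Fin n) → ℝ) {T : Finset (Sym2 (Fin n))} (hT : T ∈ TS n) :
    MSTLen n u ≤ treeLen u T := by
  apply csInf_le
  · refine (Set.Finite.subset ((TS n).image (treeLen u)).finite_toSet ?_).bddBelow
    rintro x ⟨T, hT, rfl⟩
    simp only [Finset.coe_image]
    exact ⟨T, mem_TS.2 hT, rfl⟩
  · exact ⟨T, mem_TS.1 hT, rfl⟩

lemma MSTLen_attained {n : ℕ} (hn : 1 ≤ n) (u : Sym2 (Fin n) → ℝ) :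
    ∃ T ∈ TS n, MSTLen n u = treeLen u T := by
  obtain ⟨T, hT, hmin⟩ := Finset.exists_min_image (TS n) (treeLen u) (TS_nonempty hn)
  refine ⟨T, hT, le_antisymm (MSTLen_le u hT) ?_⟩
  refine le_csInf ⟨treeLen u T, T, mem_TS.1 hT, rfl⟩ ?_
  rintro x ⟨T', hT', rfl⟩
  exact hmin T' (mem_TS.2 hT')

lemma aux_exp (x K : ℝ) : Real.exp (-x) * x ≤ K * Real.exp (-x) + Real.exp (-K) := by
  have h1 : x - K ≤ Real.exp (x - K) := by linarith [Real.add_one_le_exp (x - K)]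
  have h2 : Real.exp (-x) * Real.exp (x - K) = Real.exp (-K) := by
    rw [← Real.exp_add]; ring_nf
  nlinarith [Real.exp_pos (-x), mul_le_mul_of_nonneg_left h1 (Real.exp_pos (-x)).le]

/-- The quenched entropy bound. -/
lemma quenched_le {n : ℕ} (hn : 1 ≤ n) {β : ℝ} (hβ : 0 < β) (u : Sym2 (Fin n) → ℝ) :
    quenchedWSTLen n β u ≤ MSTLen n u + (2 * n * Real.log n + 1) / β := by
  rw [quenched_eq]
  set m := MSTLen n u with hm
  set K := 2 * n * Real.log n with hK
  have hZ : 0 < ∑ T ∈ TS n, Real.exp (-β * treeLen u T) :=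
    Finset.sum_pos (fun _ _ => Real.exp_pos _) (TS_nonempty hn)
  rw [div_le_iff₀ hZ]
  have hterm : ∀ T ∈ TS n, Real.exp (-β * treeLen u T) * treeLen u T ≤
      (m + K / β) * Real.exp (-β * treeLen u T) + Real.exp (-β * m) * Real.exp (-K) / β := by
    intro T hT
    have h := aux_exp (β * (treeLen u T - m)) K
    have e1 : Real.exp (-β * treeLen u T)
        = Real.exp (-(β * (treeLen u T - m))) * Real.exp (-β * m) := by
      rw [← Real.exp_add]; ring_nf
    rw [e1]
    set X := Real.exp (-(β * (treeLen u T - m)))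
    set Y := Real.exp (-β * m) with hY
    have hYp : 0 < Y := Real.exp_pos _
    have h2 := mul_le_mul_of_nonneg_right h (div_pos hYp hβ).le
    have e2 : X * (β * (treeLen u T - m)) * (Y / β) = X * Y * treeLen u T - m * (X * Y) := by
      field_simp
    have e3 : (K * X + Real.exp (-K)) * (Y / β) = K / β * (X * Y) + Y * Real.exp (-K) / β := by
      field_simp
    rw [e2, e3] at h2
    linarith
  refine (Finset.sum_le_sum hterm).trans ?_
  rw [Finset.sum_add_distrib, ← Finset.mul_sum, Finset.sum_const, nsmul_eq_mul]
  have hcard : ((TS n).card : ℝ) * Real.exp (-K) ≤ 1 := by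
    have h1 : ((TS n).card : ℝ) ≤ ((n : ℝ) ^ 2) ^ n := by exact_mod_cast TS_card hn
    have hn0 : (0 : ℝ) < n := by exact_mod_cast hn
    have h2 : Real.exp K = ((n : ℝ) ^ 2) ^ n := by
      rw [← Real.exp_log (show (0 : ℝ) < ((n : ℝ) ^ 2) ^ n by positivity), Real.log_pow,
        Real.log_pow, hK]
      push_cast; ring_nf
    rw [Real.exp_neg, h2, mul_inv_le_iff₀ (by positivity)]
    linarith
  obtain ⟨T, hT, hTm⟩ := MSTLen_attained hn u
  have hZm : Real.exp (-β * m) ≤ ∑ T ∈ TS n, Real.exp (-β * treeLen u T) := by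
    rw [hm, hTm]
    exact Finset.single_le_sum (f := fun T => Real.exp (-β * treeLen u T))
      (fun _ _ => (Real.exp_pos _).le) hT
  have h5 : ((TS n).card : ℝ) * (Real.exp (-β * m) * Real.exp (-K) / β)
      ≤ (∑ T ∈ TS n, Real.exp (-β * treeLen u T)) / β := by
    rw [← mul_div_assoc]
    gcongr
    calc ((TS n).card : ℝ) * (Real.exp (-β * m) * Real.exp (-K))
        = (((TS n).card : ℝ) * Real.exp (-K)) * Real.exp (-β * m) := by ring
      _ ≤ 1 * Real.exp (-β * m) := by gcongr
      _ ≤ _ := by linarith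
  calc _ ≤ _ := add_le_add_right h5 _
    _ = _ := by ring

lemma ae_bd (n : ℕ) : ∀ᵐ u ∂(labelMeasure n), ∀ e, u e ∈ Set.Icc (0 : ℝ) 1 := by
  rw [ae_all_iff]
  intro e
  have h : ∀ᵐ x ∂(volume.restrict (Set.Icc (0 : ℝ) 1)), x ∈ Set.Icc (0 : ℝ) 1 :=
    ae_restrict_mem measurableSet_Icc
  exact (Measure.tendsto_eval_ae_ae
    (μ := fun _ : Sym2 (Fin n) => volume.restrict (Set.Icc (0 : ℝ) 1)) (i := e)).eventually h

instance (n : ℕ) : IsProbabilityMeasure (labelMeasure n) := by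
  have : IsProbabilityMeasure (volume.restrict (Set.Icc (0 : ℝ) 1)) := ⟨by simp⟩
  unfold labelMeasure
  infer_instance

lemma treeLen_bd {n : ℕ} {u : Sym2 (Fin n) → ℝ} (hu : ∀ e, u e ∈ Set.Icc (0 : ℝ) 1)
    {T : Finset (Sym2 (Fin n))} (hT : T ∈ TS n) : treeLen u T ∈ Set.Icc (0 : ℝ) n := by
  refine ⟨Finset.sum_nonneg fun e _ => (hu e).1, ?_⟩
  refine (Finset.sum_le_card_nsmul _ _ 1 fun e _ => (hu e).2).trans ?_
  have := TS_card_edges hT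
  simp only [nsmul_eq_mul, mul_one, Nat.cast_le]
  omega

lemma measurable_treeLen {n : ℕ} (T : Finset (Sym2 (Fin n))) :
    Measurable (fun u : Sym2 (Fin n) → ℝ => treeLen u T) := by
  unfold treeLen
  fun_prop

lemma measurable_MSTLen {n : ℕ} : Measurable (MSTLen n) := by
  have : MSTLen n = fun u => ⨅ T : {T // T ∈ TS n}, treeLen u T.1 := by
    funext u
    unfold MSTLen iInf
    congr 1
    ext x
    constructor
    · rintro ⟨T, hT, rfl⟩
      exact ⟨⟨T, mem_TS.2 hT⟩, rfl⟩
    · rintro ⟨⟨T, hT⟩, rfl⟩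
      exact ⟨T, mem_TS.1 hT, rfl⟩
  rw [this]
  exact Measurable.iInf fun T => measurable_treeLen _

lemma measurable_quenched {n : ℕ} (β : ℝ) : Measurable (quenchedWSTLen n β) := by
  have : quenchedWSTLen n β = fun u =>
      (∑ T ∈ TS n, Real.exp (-β * treeLen u T) * treeLen u T) /
      (∑ T ∈ TS n, Real.exp (-β * treeLen u T)) := by
    funext u; rw [quenched_eq]
  rw [this]
  have := @measurable_treeLen n
  fun_prop

lemma MST_bd {n : ℕ} (hn : 1 ≤ n) {u : Sym2 (Fin n) → ℝ} (hu : ∀ e, u e ∈ Set.Icc (0 : ℝ) 1) :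
    MSTLen n u ∈ Set.Icc (0 : ℝ) n := by
  obtain ⟨T, hT, h⟩ := MSTLen_attained hn u
  rw [h]
  exact treeLen_bd hu hT

lemma quenched_bd {n : ℕ} (hn : 1 ≤ n) (β : ℝ) {u : Sym2 (Fin n) → ℝ}
    (hu : ∀ e, u e ∈ Set.Icc (0 : ℝ) 1) : quenchedWSTLen n β u ∈ Set.Icc (0 : ℝ) n := by
  rw [quenched_eq]
  have hZ : 0 < ∑ T ∈ TS n, Real.exp (-β * treeLen u T) :=
    Finset.sum_pos (fun _ _ => Real.exp_pos _) (TS_nonempty hn)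
  constructor
  · refine div_nonneg (Finset.sum_nonneg fun T hT => ?_) hZ.le
    exact mul_nonneg (Real.exp_pos _).le (treeLen_bd hu hT).1
  · rw [div_le_iff₀ hZ, Finset.mul_sum]
    refine Finset.sum_le_sum fun T hT => ?_
    rw [mul_comm]
    exact mul_le_mul_of_nonneg_right (treeLen_bd hu hT).2 (Real.exp_pos _).le

lemma integrable_MST {n : ℕ} (hn : 1 ≤ n) : Integrable (MSTLen n) (labelMeasure n) := by
  refine Integrable.of_bound measurable_MSTLen.aestronglyMeasurable n ?_
  filter_upwards [ae_bd n] with u hu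
  have := MST_bd hn hu
  rw [Real.norm_of_nonneg this.1]
  exact this.2

lemma integrable_quenched {n : ℕ} (hn : 1 ≤ n) (β : ℝ) :
    Integrable (quenchedWSTLen n β) (labelMeasure n) := by
  refine Integrable.of_bound (measurable_quenched β).aestronglyMeasurable n ?_
  filter_upwards [ae_bd n] with u hu
  have := quenched_bd hn β hu
  rw [Real.norm_of_nonneg this.1]
  exact this.2

lemma EWST_le_n {n : ℕ} (hn : 1 ≤ n) (β : ℝ) : EWST n β ≤ n := by
  unfold EWST
  calc _ ≤ ∫ _u, (n : ℝ) ∂(labelMeasure n) := by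
        refine integral_mono_ae (integrable_quenched hn β) (integrable_const _) ?_
        filter_upwards [ae_bd n] with u hu
        exact (quenched_bd hn β hu).2
    _ = n := by simp

lemma EWST_le_EMST {n : ℕ} (hn : 1 ≤ n) {β : ℝ} (hβ : 0 < β) :
    EWST n β ≤ EMST n + (2 * n * Real.log n + 1) / β := by
  unfold EWST EMST
  calc _ ≤ ∫ u, (MSTLen n u + (2 * n * Real.log n + 1) / β) ∂(labelMeasure n) := by
        refine integral_mono_ae (integrable_quenched hn β)
          ((integrable_MST hn).add (integrable_const _)) ?_
        filter_upwards with u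
        exact quenched_le hn hβ u
    _ = _ := by rw [integral_add (integrable_MST hn) (integrable_const _)]; simp

/-! ### Upper bound on `EMST` -/

lemma meas_Ici (t : ℝ) (ht : 0 < t) :
    (volume.restrict (Set.Icc (0 : ℝ) 1)) (Set.Ici t) ≤ ENNReal.ofReal (Real.exp (-t)) := by
  rw [Measure.restrict_apply measurableSet_Ici]
  calc volume (Set.Ici t ∩ Set.Icc (0 : ℝ) 1) ≤ volume (Set.Icc t 1) :=
        measure_mono fun x hx => ⟨hx.1, hx.2.2⟩
    _ = ENNReal.ofReal (1 - t) := Real.volume_Icc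
    _ ≤ _ := ENNReal.ofReal_le_ofReal (by linarith [Real.add_one_le_exp (-t)])

/-- The expected minimum of the labels over a set of edges. -/
lemma lintegral_min {n : ℕ} (E : Finset (Sym2 (Fin n))) :
    ∫⁻ u, ⨅ e ∈ E, ENNReal.ofReal (u e) ∂(labelMeasure n) ≤ ((E.card : ℝ≥0∞))⁻¹ := by
  classical
  rcases E.eq_empty_or_nonempty with rfl | hE
  · simp
  have hm : Measurable (fun u : Sym2 (Fin n) → ℝ => E.inf' hE (fun e => u e)) := by
    exact (Continuous.finset_inf'_apply hE (fun e _ => continuous_apply e)).measurable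
  have hc : (0 : ℝ) < E.card := by exact_mod_cast hE.card_pos
  have : IsProbabilityMeasure (volume.restrict (Set.Icc (0 : ℝ) 1)) := ⟨by simp⟩
  calc ∫⁻ u, ⨅ e ∈ E, ENNReal.ofReal (u e) ∂(labelMeasure n)
      ≤ ∫⁻ u, ENNReal.ofReal (E.inf' hE (fun e => u e)) ∂(labelMeasure n) := by
        refine lintegral_mono fun u => ?_
        obtain ⟨e, he, h⟩ := Finset.exists_mem_eq_inf' hE (fun e => u e)
        simp only [h]
        exact iInf₂_le e he
    _ = ∫⁻ t in Set.Ioi 0, labelMeasure n {u | t ≤ E.inf' hE (fun e => u e)} := by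
        refine lintegral_eq_lintegral_meas_le _ ?_ hm.aemeasurable
        filter_upwards [ae_bd n] with u hu
        simp only [Pi.zero_apply, Finset.le_inf'_iff]
        exact fun e _ => (hu e).1
    _ ≤ ∫⁻ t in Set.Ioi 0, ENNReal.ofReal (Real.exp (-(E.card : ℝ) * t)) := by
        refine setLIntegral_mono' measurableSet_Ioi fun t ht => ?_
        have hs : {u : Sym2 (Fin n) → ℝ | t ≤ E.inf' hE (fun e => u e)} =
            Set.univ.pi (fun e => if e ∈ E then Set.Ici t else Set.univ) := by
          ext u
          simp only [Set.mem_ofPred_eq, Finset.le_inf'_iff, Set.mem_pi, Set.mem_univ, true_imp_iff]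
          refine forall_congr' fun e => ?_
          by_cases he : e ∈ E <;> simp [he]
        rw [hs, labelMeasure, Measure.pi_pi]
        calc _ ≤ ∏ e : Sym2 (Fin n), (if e ∈ E then ENNReal.ofReal (Real.exp (-t)) else 1) := by
              refine Finset.prod_le_prod' fun e _ => ?_
              by_cases he : e ∈ E
              · simp only [he, if_true]; exact meas_Ici t ht
              · simp only [he, if_false]; exact prob_le_one
          _ = ENNReal.ofReal (Real.exp (-t)) ^ E.card := by
              rw [Finset.prod_ite_mem]; simp
          _ = _ := by
              rw [← ENNReal.ofReal_pow (Real.exp_pos _).le, ← Real.exp_nat_mul]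
              ring_nf
          _ ≤ _ := le_rfl
    _ = ENNReal.ofReal (∫ t in Set.Ioi 0, Real.exp (-(E.card : ℝ) * t)) := by
        rw [ofReal_integral_eq_lintegral_ofReal]
        · exact integrableOn_exp_mul_Ioi (by linarith) 0
        · exact Filter.Eventually.of_forall fun _ => (Real.exp_pos _).le
    _ = _ := by
        rw [integral_exp_mul_Ioi (by linarith) 0]
        simp
        rw [ENNReal.ofReal_inv_of_pos hc]
        simp

/-- Take labels in `E` from the first copy, and the others from the second copy. -/
noncomputable def mix {n : ℕ} (E : Finset (Sym2 (Fin n)))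
    (p : (Sym2 (Fin n) → ℝ) × (Sym2 (Fin n) → ℝ)) : Sym2 (Fin n) → ℝ :=
  open Classical in fun e => if e ∈ E then p.1 e else p.2 e

lemma mix_mp {n : ℕ} (E : Finset (Sym2 (Fin n))) :
    MeasurePreserving (mix E) ((labelMeasure n).prod (labelMeasure n)) (labelMeasure n) := by
  classical
  have : IsProbabilityMeasure (volume.restrict (Set.Icc (0 : ℝ) 1)) := ⟨by simp⟩
  have hmeas : Measurable (mix E) := by
    refine measurable_pi_lambda _ fun e => ?_
    unfold mix
    by_cases he : e ∈ E
    · simp only [he, if_true]; fun_prop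
    · simp only [he, if_false]; fun_prop
  refine ⟨hmeas, ?_⟩
  symm
  conv_lhs => rw [labelMeasure]
  refine Measure.pi_eq fun s hs => ?_
  rw [Measure.map_apply hmeas (MeasurableSet.univ_pi hs)]
  have : mix E ⁻¹' (Set.univ.pi s) =
      (Set.univ.pi fun e => if e ∈ E then s e else Set.univ) ×ˢ
      (Set.univ.pi fun e => if e ∈ E then Set.univ else s e) := by
    ext p
    simp only [mix, Set.mem_preimage, Set.mem_pi, Set.mem_univ, true_imp_iff, Set.mem_prod,
      ← forall_and]
    refine forall_congr' fun e => ?_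
    by_cases he : e ∈ E <;> simp [he]
  rw [this, Measure.prod_prod, labelMeasure, Measure.pi_pi, Measure.pi_pi,
    ← Finset.prod_mul_distrib]
  refine Finset.prod_congr rfl fun e _ => ?_
  by_cases he : e ∈ E
  · simp only [he, if_true, measure_univ, mul_one]
  · simp only [he, if_false, measure_univ, one_mul]

/-- Cost of the greedy construction. -/
noncomputable def cst {n : ℕ} (Y : Finset (Fin n)) (u : Sym2 (Fin n) → ℝ) :
    ℕ → Finset (Fin n) → Fin n → Finset (Fin n) → ℝ≥0∞
  | 0, A, _, S => ∑ y ∈ Y, (⨅ e ∈ A.image (fun a => s(a, y)), ENNReal.ofReal (u e)) +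
      ∑ x ∈ S, (⨅ e ∈ Y.image (fun y => s(x, y)), ENNReal.ofReal (u e))
  | k + 1, A, v, S => ⨅ w ∈ S, (ENNReal.ofReal (u s(v, w)) +
      cst Y u k (insert w A) w (S.erase w))

lemma measurable_inf_label {n : ℕ} (E : Finset (Sym2 (Fin n))) :
    Measurable (fun u : Sym2 (Fin n) → ℝ => ⨅ e ∈ E, ENNReal.ofReal (u e)) :=
  Measurable.biInf (E : Set (Sym2 (Fin n))) E.countable_toSet (fun e _ => by fun_prop)

lemma measurable_cst {n : ℕ} (Y : Finset (Fin n)) (k : ℕ) :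
    ∀ A v S, Measurable (fun u => cst Y u k A v S) := by
  induction k with
  | zero =>
    intro A v S
    simp only [cst]
    exact (Finset.measurable_sum _ fun y _ => measurable_inf_label _).add
      (Finset.measurable_sum _ fun y _ => measurable_inf_label _)
  | succ k ih =>
    intro A v S
    simp only [cst]
    refine Measurable.biInf (S : Set (Fin n)) S.countable_toSet (fun w _ => ?_)
    exact Measurable.add (by fun_prop) (ih _ _ _)

/-- The cost depends only on the labels that are not yet explored. -/
lemma cst_congr {n : ℕ} (Y : Finset (Fin n)) {u u' : Sym2 (Fin n) → ℝ} (k : ℕ) :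
    ∀ A v S, (∀ x ∈ S, ∀ w ∈ insert v S, u s(w, x) = u' s(w, x)) →
      (∀ y ∈ Y, ∀ x ∈ A ∪ S, u s(x, y) = u' s(x, y)) →
      cst Y u k A v S = cst Y u' k A v S := by
  induction k with
  | zero =>
    intro A v S _ h2
    simp only [cst]
    congr 1
    · refine Finset.sum_congr rfl fun y hy => ?_
      refine iInf_congr fun e => iInf_congr fun he => ?_
      obtain ⟨a, ha, rfl⟩ := Finset.mem_image.1 he
      rw [h2 y hy a (by simp [ha])]
    · refine Finset.sum_congr rfl fun x hx => ?_
      refine iInf_congr fun e => iInf_congr fun he => ?_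
      obtain ⟨y, hy, rfl⟩ := Finset.mem_image.1 he
      rw [h2 y hy x (by simp [hx])]
  | succ k ih =>
    intro A v S h1 h2
    simp only [cst]
    refine iInf_congr fun w => iInf_congr fun hw => ?_
    rw [h1 w hw v (by simp), ih]
    · intro x hx z hz
      refine h1 x (Finset.mem_of_mem_erase hx) z ?_
      simp only [Finset.mem_insert, Finset.mem_erase] at hz ⊢
      rcases hz with rfl | hz
      · exact Or.inr hw
      · exact Or.inr hz.2
    · intro y hy x hx
      refine h2 y hy x ?_
      simp only [Finset.mem_union, Finset.mem_insert, Finset.mem_erase] at hx ⊢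
      rcases hx with (rfl | hx) | hx
      · exact Or.inr hw
      · exact Or.inl hx
      · exact Or.inr hx.2

lemma lintegral_star {n : ℕ} (v : Fin n) (S : Finset (Fin n)) {m : ℕ} (hm : m ≤ S.card) :
    ∫⁻ u, ⨅ e ∈ S.image (fun a => s(v, a)), ENNReal.ofReal (u e) ∂(labelMeasure n)
      ≤ (m : ℝ≥0∞)⁻¹ := by
  refine (lintegral_min _).trans ?_
  rw [Finset.card_image_of_injective]
  · exact ENNReal.inv_le_inv.2 (by exact_mod_cast hm)
  · intro a b h
    rcases Sym2.eq_iff.1 h with h | h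
    · exact h.2
    · exact h.2.trans h.1

lemma lintegral_cst {n m : ℕ} (Y : Finset (Fin n)) (hY : m ≤ Y.card) (k : ℕ) :
    ∀ A v S, m ≤ A.card + k → m + k ≤ S.card + 1 → v ∉ S → v ∉ Y → Disjoint A S → Disjoint S Y →
      ∫⁻ u, cst Y u k A v S ∂(labelMeasure n) ≤
        (k : ℝ≥0∞) * (m : ℝ≥0∞)⁻¹ + (n * (m : ℝ≥0∞)⁻¹ + n * (m : ℝ≥0∞)⁻¹) := by
  induction k with
  | zero =>
    intro A v S hA _ _ _ _ _
    simp only [cst, Nat.cast_zero, zero_mul, zero_add]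
    rw [lintegral_add_left (Finset.measurable_sum _ fun y _ => measurable_inf_label _),
      lintegral_finsetSum _ fun y _ => measurable_inf_label _,
      lintegral_finsetSum _ fun y _ => measurable_inf_label _]
    gcongr
    · calc _ ≤ ∑ y ∈ Y, (m : ℝ≥0∞)⁻¹ := by
            refine Finset.sum_le_sum fun y _ => ?_
            have := lintegral_star y A (m := m) (by simpa using hA)
            simpa only [Sym2.eq_swap] using this
        _ = Y.card * (m : ℝ≥0∞)⁻¹ := by simp
        _ ≤ _ := by
            gcongr
            simpa using Finset.card_le_univ Y
    · calc _ ≤ ∑ y ∈ S, (m : ℝ≥0∞)⁻¹ := by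
            refine Finset.sum_le_sum fun x _ => ?_
            exact lintegral_star x Y hY
        _ = S.card * (m : ℝ≥0∞)⁻¹ := by simp
        _ ≤ _ := by
            gcongr
            simpa using Finset.card_le_univ S
  | succ k ih =>
    intro A v S hA hS hvS hvY hAS hSY
    set B := (k : ℝ≥0∞) * (m : ℝ≥0∞)⁻¹ + (n * (m : ℝ≥0∞)⁻¹ + n * (m : ℝ≥0∞)⁻¹) with hB
    set E := S.image (fun a => s(v, a)) with hE
    rw [← (mix_mp E).lintegral_comp (measurable_cst Y (k + 1) A v S),
      lintegral_prod (fun p => cst Y (mix E p) (k + 1) A v S)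
        ((measurable_cst Y (k + 1) A v S).comp (mix_mp E).measurable).aemeasurable]
    have hmain : ∀ u : Sym2 (Fin n) → ℝ, ∫⁻ u', cst Y (mix E (u, u')) (k + 1) A v S
        ∂(labelMeasure n) ≤ (⨅ e ∈ E, ENNReal.ofReal (u e)) + B := by
      intro u
      rw [← tsub_le_iff_right]
      refine le_iInf₂ fun e he => ?_
      rw [tsub_le_iff_right]
      obtain ⟨w, hw, rfl⟩ := Finset.mem_image.1 he
      have hpt : ∀ u', cst Y (mix E (u, u')) (k + 1) A v S ≤
          ENNReal.ofReal (u s(v, w)) + cst Y u' k (insert w A) w (S.erase w) := by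
        intro u'
        simp only [cst]
        refine (iInf₂_le w hw).trans ?_
        have h1 : mix E (u, u') s(v, w) = u s(v, w) := by simp [mix, he]
        rw [h1]
        refine add_le_add_right (le_of_eq ?_) _
        apply cst_congr
        · intro x hx z hz
          have : s(z, x) ∉ E := by
            intro h
            obtain ⟨a, ha, h⟩ := Finset.mem_image.1 h
            have hx' : x ∈ S := Finset.mem_of_mem_erase hx
            have hz' : z ∈ S := by
              simp only [Finset.mem_insert, Finset.mem_erase] at hz
              rcases hz with rfl | hz
              · exact hw
              · exact hz.2
            rcases Sym2.eq_iff.1 h with ⟨rfl, rfl⟩ | ⟨rfl, rfl⟩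
            · exact hvS hz'
            · exact hvS hx'
          simp [mix, this]
        · intro y hy x hx
          have : s(x, y) ∉ E := by
            intro h
            obtain ⟨a, ha, h⟩ := Finset.mem_image.1 h
            rcases Sym2.eq_iff.1 h with ⟨rfl, rfl⟩ | ⟨rfl, rfl⟩
            · exact Finset.disjoint_left.1 hSY ha hy
            · exact hvY hy
          simp [mix, this]
      calc _ ≤ ∫⁻ u', (ENNReal.ofReal (u s(v, w)) + cst Y u' k (insert w A) w (S.erase w))
            ∂(labelMeasure n) := lintegral_mono hpt
        _ = ENNReal.ofReal (u s(v, w)) +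
            ∫⁻ u', cst Y u' k (insert w A) w (S.erase w) ∂(labelMeasure n) := by
            rw [lintegral_add_left measurable_const]; simp
        _ ≤ _ := by
            gcongr
            have hwA : w ∉ A := Finset.disjoint_right.1 hAS hw
            apply ih
            · rw [Finset.card_insert_of_notMem hwA]; omega
            · rw [Finset.card_erase_of_mem hw]; omega
            · simp
            · exact Finset.disjoint_left.1 hSY hw
            · rw [Finset.disjoint_left]
              intro x hx hx2
              simp only [Finset.mem_insert, Finset.mem_erase] at hx hx2
              rcases hx with rfl | hx
              · exact hx2.1 rfl
              · exact Finset.disjoint_left.1 hAS hx hx2.2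
            · exact hSY.mono_left (Finset.erase_subset _ _)
    calc _ ≤ ∫⁻ u, ((⨅ e ∈ E, ENNReal.ofReal (u e)) + B) ∂(labelMeasure n) := lintegral_mono hmain
      _ = (∫⁻ u, (⨅ e ∈ E, ENNReal.ofReal (u e)) ∂(labelMeasure n)) + B := by
          rw [lintegral_add_right _ measurable_const]; simp
      _ ≤ (m : ℝ≥0∞)⁻¹ + B := by
          gcongr
          exact lintegral_star v S (by omega)
      _ = _ := by rw [hB]; push_cast; ring

/-- Deterministic part: the greedy cost bounds the cost of the MST. -/
lemma MST_le_of_connected {n : ℕ} {u : Sym2 (Fin n) → ℝ} (hu : ∀ e, 0 ≤ u e)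
    (F : Finset (Sym2 (Fin n)))
    (hF : (SimpleGraph.fromEdgeSet (↑F : Set (Sym2 (Fin n)))).Connected) :
    ENNReal.ofReal (MSTLen n u) ≤ ∑ e ∈ F, ENNReal.ofReal (u e) := by
  obtain ⟨T, hT, hTF⟩ := exists_tree F hF
  calc ENNReal.ofReal (MSTLen n u) ≤ ENNReal.ofReal (treeLen u T) :=
        ENNReal.ofReal_le_ofReal (MSTLen_le u hT)
    _ = ∑ e ∈ T, ENNReal.ofReal (u e) := ENNReal.ofReal_sum_of_nonneg fun e _ => hu e
    _ ≤ _ := Finset.sum_le_sum_of_subset hTF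

lemma sum_union_le' {ι : Type*} [DecidableEq ι] (f : ι → ℝ≥0∞) (s t : Finset ι) :
    ∑ e ∈ s ∪ t, f e ≤ ∑ e ∈ s, f e + ∑ e ∈ t, f e := by
  rw [← Finset.sum_union_inter]
  exact le_self_add

lemma reach_edge {n : ℕ} (F : Finset (Sym2 (Fin n))) {a b : Fin n} (h : s(a, b) ∈ F) :
    (SimpleGraph.fromEdgeSet (↑F : Set (Sym2 (Fin n)))).Reachable a b := by
  by_cases hab : a = b
  · subst hab; exact SimpleGraph.Reachable.refl _
  · apply SimpleGraph.Adj.reachable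
    rw [SimpleGraph.fromEdgeSet_adj]
    exact ⟨by exact_mod_cast h, hab⟩

lemma reach_mono {n : ℕ} {F F' : Finset (Sym2 (Fin n))} (h : F ⊆ F') {a b : Fin n}
    (hr : (SimpleGraph.fromEdgeSet (↑F : Set (Sym2 (Fin n)))).Reachable a b) :
    (SimpleGraph.fromEdgeSet (↑F' : Set (Sym2 (Fin n)))).Reachable a b :=
  hr.mono (SimpleGraph.fromEdgeSet_mono (by exact_mod_cast h))

lemma MST_le_cst {n : ℕ} {u : Sym2 (Fin n) → ℝ} (hu : ∀ e, 0 ≤ u e) (Y : Finset (Fin n))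
    (hY : Y.Nonempty) (k : ℕ) :
    ∀ (A : Finset (Fin n)) (v : Fin n) (S : Finset (Fin n)) (F : Finset (Sym2 (Fin n))),
      v ∈ A → (∀ x, x ∈ A ∨ x ∈ S ∨ x ∈ Y) →
      (∀ a ∈ A, (SimpleGraph.fromEdgeSet (↑F : Set (Sym2 (Fin n)))).Reachable v a) →
      ENNReal.ofReal (MSTLen n u) ≤ ∑ e ∈ F, ENNReal.ofReal (u e) + cst Y u k A v S := by
  classical
  induction k with
  | zero =>
    intro A v S F hv hcov hF
    have hmin : ∀ E : Finset (Sym2 (Fin n)), E.Nonempty →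
        ∃ e ∈ E, (⨅ e ∈ E, ENNReal.ofReal (u e)) = ENNReal.ofReal (u e) := by
      intro E hE
      obtain ⟨e, he, h⟩ := Finset.exists_min_image E (fun e => ENNReal.ofReal (u e)) hE
      exact ⟨e, he, le_antisymm (iInf₂_le e he) (le_iInf₂ h)⟩
    choose f hf hf' using fun y => hmin (A.image (fun a => s(a, y))) ⟨_, Finset.mem_image_of_mem _ hv⟩
    choose g hg hg' using fun x => hmin (Y.image (fun y => s(x, y))) (hY.image _)
    simp only [cst, hf', hg']
    set F' := F ∪ (Y.image f ∪ S.image g) with hF'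
    have hsub : F ⊆ F' := Finset.subset_union_left
    have hAr : ∀ a ∈ A, (SimpleGraph.fromEdgeSet (↑F' : Set (Sym2 (Fin n)))).Reachable v a :=
      fun a ha => reach_mono hsub (hF a ha)
    have hYr : ∀ y ∈ Y, (SimpleGraph.fromEdgeSet (↑F' : Set (Sym2 (Fin n)))).Reachable v y := by
      intro y hy
      obtain ⟨a, ha, h⟩ := Finset.mem_image.1 (hf y)
      refine (hAr a ha).trans (reach_edge F' ?_)
      rw [h]
      simp only [hF', Finset.mem_union]
      exact Or.inr (Or.inl (Finset.mem_image_of_mem _ hy))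
    have hSr : ∀ x ∈ S, (SimpleGraph.fromEdgeSet (↑F' : Set (Sym2 (Fin n)))).Reachable v x := by
      intro x hx
      obtain ⟨y, hy, h⟩ := Finset.mem_image.1 (hg x)
      refine (hYr y hy).trans (reach_edge F' ?_).symm
      rw [h]
      simp only [hF', Finset.mem_union]
      exact Or.inr (Or.inr (Finset.mem_image_of_mem _ hx))
    have hall : ∀ x, (SimpleGraph.fromEdgeSet (↑F' : Set (Sym2 (Fin n)))).Reachable v x := by
      intro x
      rcases hcov x with h | h | h
      · exact hAr x h
      · exact hSr x h
      · exact hYr x h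
    have hconn : (SimpleGraph.fromEdgeSet (↑F' : Set (Sym2 (Fin n)))).Connected := by
      have : Nonempty (Fin n) := ⟨v⟩
      exact SimpleGraph.Connected.mk fun a b => (hall a).symm.trans (hall b)
    refine (MST_le_of_connected hu F' hconn).trans ?_
    refine (sum_union_le' _ _ _).trans ?_
    gcongr
    refine (sum_union_le' _ _ _).trans ?_
    gcongr
    · exact Finset.sum_image_le_of_nonneg fun _ _ => zero_le
    · exact Finset.sum_image_le_of_nonneg fun _ _ => zero_le
  | succ k ih =>
    intro A v S F hv hcov hF
    simp only [cst]
    rw [← tsub_le_iff_left]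
    refine le_iInf₂ fun w hw => ?_
    rw [tsub_le_iff_left]
    have hsub : F ⊆ F ∪ {s(v, w)} := Finset.subset_union_left
    have hvw : (SimpleGraph.fromEdgeSet (↑(F ∪ {s(v, w)}) : Set (Sym2 (Fin n)))).Reachable v w :=
      reach_edge _ (by simp)
    refine (ih (insert w A) w (S.erase w) (F ∪ {s(v, w)}) (by simp) ?_ ?_).trans ?_
    · intro x
      by_cases hx : x = w
      · simp [hx]
      · simpa [hx] using hcov x
    · intro a ha
      rcases Finset.mem_insert.1 ha with rfl | ha
      · exact SimpleGraph.Reachable.refl _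
      · exact hvw.symm.trans (reach_mono hsub (hF a ha))
    · rw [← add_assoc]
      gcongr
      refine (sum_union_le' _ _ _).trans ?_
      simp

lemma EMST_le {n : ℕ} (hn : 4 ≤ n) : EMST n ≤ 17 := by
  classical
  obtain ⟨m, hm⟩ : ∃ m, m = n / 4 := ⟨_, rfl⟩
  have hm1 : 1 ≤ m := by omega
  have hm2 : n ≤ 8 * m := by omega
  have hm3 : 4 * m ≤ n := by omega
  set v : Fin n := ⟨0, by omega⟩ with hv
  set X : Finset (Fin n) := Finset.univ.filter (fun i => i.1 < 2 * m) with hX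
  have hXc : X.card = 2 * m := by
    have : X = (Finset.Iio (⟨2 * m, by omega⟩ : Fin n)) := by
      ext i; simp [hX, Fin.lt_def]
    rw [this, Fin.card_Iio]
  have hYc : Xᶜ.card = n - 2 * m := by
    rw [Finset.card_compl, hXc, Fintype.card_fin]
  have hvX : v ∈ X := by simp [hX, hv]; omega
  have hnn : ∀ᵐ u ∂(labelMeasure n), 0 ≤ MSTLen n u := by
    filter_upwards [ae_bd n] with u hu
    exact (MST_bd (by omega) hu).1
  unfold EMST
  rw [integral_eq_lintegral_of_nonneg_ae hnn measurable_MSTLen.aestronglyMeasurable]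
  refine ENNReal.toReal_le_of_le_ofReal (by norm_num) ?_
  have h1 : ∫⁻ u, ENNReal.ofReal (MSTLen n u) ∂(labelMeasure n) ≤
      ∫⁻ u, cst Xᶜ u (m - 1) {v} v (X.erase v) ∂(labelMeasure n) := by
    refine lintegral_mono_ae ?_
    filter_upwards [ae_bd n] with u hu
    have := MST_le_cst (fun e => (hu e).1) Xᶜ (Finset.card_pos.1 (by omega)) (m - 1) {v} v
      (X.erase v) ∅ (by simp) ?_ ?_
    · simpa using this
    · intro x
      by_cases hx : x = v
      · simp [hx]
      · simp only [Finset.mem_singleton, Finset.mem_erase, Finset.mem_compl]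
        tauto
    · intro a ha
      rw [Finset.mem_singleton.1 ha]
  have h2 := lintegral_cst (n := n) (m := m) Xᶜ (by omega) (m - 1) {v} v (X.erase v)
    (by simp; omega) (by rw [Finset.card_erase_of_mem hvX]; omega) (by simp) (by simpa using hvX)
    (by simp)
    (by
      rw [Finset.disjoint_left]
      intro x hx
      simpa using Finset.mem_of_mem_erase hx)
  refine h1.trans (h2.trans ?_)
  have hm0 : (m : ℝ≥0∞) ≠ 0 := by exact_mod_cast (by omega : m ≠ 0)
  have hmi : (m : ℝ≥0∞) * (m : ℝ≥0∞)⁻¹ = 1 := ENNReal.mul_inv_cancel hm0 (by simp)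
  have ha : ((m - 1 : ℕ) : ℝ≥0∞) ≤ m := by exact_mod_cast (by omega)
  have hb : (n : ℝ≥0∞) ≤ 8 * m := by exact_mod_cast hm2
  calc _ ≤ (m : ℝ≥0∞) * (m : ℝ≥0∞)⁻¹ +
        (8 * m * (m : ℝ≥0∞)⁻¹ + 8 * m * (m : ℝ≥0∞)⁻¹) := by gcongr
    _ = 17 * ((m : ℝ≥0∞) * (m : ℝ≥0∞)⁻¹) := by ring
    _ = ENNReal.ofReal 17 := by rw [hmi]; simp

end WSTaux

theorem stmt_14 (β : ℕ → ℝ) (hβ0 : ∀ n, 0 ≤ β n)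
    (hβ : ∀ᶠ n : ℕ in atTop, β n ≤ n * Real.log n) :
    (∃ C > (0 : ℝ), ∀ᶠ n : ℕ in atTop,
        EWST n (β n) ≤ C * ((n : ℝ) * Real.log n / (β n + Real.log n))) ∧
    ((∀ᶠ n : ℕ in atTop, Real.log n ≤ β n) →
      ∃ C > (0 : ℝ), ∀ᶠ n : ℕ in atTop,
        EWST n (β n) ≤ EMST n + C * ((n : ℝ) * Real.log n / β n) + C * (1 / (n : ℝ))) := by
  have key : ∀ n : ℕ, 4 ≤ n → Real.log n ≤ β n →
      EWST n (β n) ≤ EMST n + 3 * ((n : ℝ) * Real.log n / β n) := by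
    intro n hn hl
    have hn' : (4 : ℝ) ≤ n := by exact_mod_cast hn
    have hlog : 1 ≤ Real.log n := by
      rw [Real.le_log_iff_exp_le (by linarith)]
      linarith [Real.exp_one_lt_d9]
    have hb : 0 < β n := by linarith
    refine (WSTaux.EWST_le_EMST (by omega) hb).trans ?_
    rw [← mul_div_assoc]
    gcongr
    nlinarith
  constructor
  · refine ⟨40, by norm_num, ?_⟩
    filter_upwards [hβ, eventually_ge_atTop 4] with n hbn hn
    have hn' : (4 : ℝ) ≤ n := by exact_mod_cast hn
    have hlog : 1 ≤ Real.log n := by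
      rw [Real.le_log_iff_exp_le (by linarith)]
      linarith [Real.exp_one_lt_d9]
    have hb0 := hβ0 n
    rcases le_total (Real.log n) (β n) with hl | hl
    · have hb : 0 < β n := by linarith
      have h1 := key n hn hl
      have h2 := WSTaux.EMST_le hn
      have h3 : 1 ≤ (n : ℝ) * Real.log n / β n := by rwa [le_div_iff₀ hb, one_mul]
      have h4 : (n : ℝ) * Real.log n / (2 * β n) ≤ (n : ℝ) * Real.log n / (β n + Real.log n) := by
        gcongr
        linarith
      have h5 : (n : ℝ) * Real.log n / (2 * β n) = (n : ℝ) * Real.log n / β n / 2 := by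
        field_simp
      linarith
    · have h1 := WSTaux.EWST_le_n (n := n) (by omega) (β n)
      have h4 : (n : ℝ) * Real.log n / (2 * Real.log n) ≤
          (n : ℝ) * Real.log n / (β n + Real.log n) := by
        gcongr
        linarith
      have h5 : (n : ℝ) * Real.log n / (2 * Real.log n) = n / 2 := by
        field_simp
      linarith
  · intro h
    refine ⟨3, by norm_num, ?_⟩
    filter_upwards [h, eventually_ge_atTop 4] with n hl hn
    have h1 := key n hn hl
    have : (0 : ℝ) ≤ 3 * (1 / (n : ℝ)) := by positivity
    linarith
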